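/- Let r be a rational number with ν_2(r) ≥ 1. For every integer m ≥ 0, ν_2(Q_{2m+1}(r)) = 1 + ν_2(r) + ν_2(C(2m, m)), where Q_n(x) := Σ_{k=0}^{⌊n/2⌋} (−1)^k C(n,k) C(2n−2k, n) x^{n−2k} and C(a,b) denotes the binomial coefficient. -/

import Mathlib

/-!
For `k ≤ m` the factorial formula together with `ν₂((2n)!) = ν₂((2n+1)!) = n + ν₂(n!)` gives the
exact valuation of the coefficient of `x^(2(m-k)+1)` in `Q_(2m+1)`:
`ν₂(C(2m+1,k) C(2(2m+1)-2k, 2m+1)) = 1 + ν₂(C(2m,m)) + ν₂(C(m,k))`.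
Hence the linear term (`k = m`), evaluated at `r`, has valuation exactly
`1 + ν₂(r) + ν₂(C(2m,m))`, while every other term has the larger valuation
`1 + ν₂(C(2m,m)) + ν₂(C(m,k)) + (2(m-k)+1) ν₂(r)`, because `ν₂(r) > 0`. By the ultrametric
inequality the linear term determines the valuation of the sum.
-/

/-- `Q_n(x) = ∑_{k=0}^{⌊n/2⌋} (-1)^k C(n,k) C(2n-2k, n) x^(n-2k)`, so that `Q_n = 2^n P_n`
for the Legendre polynomial `P_n`. -/
def legendreQ (n : ℕ) (x : ℚ) : ℚ :=
  ∑ k ∈ Finset.range (n / 2 + 1),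
    (-1 : ℚ) ^ k * (n.choose k : ℚ) * (((2 * n - 2 * k).choose n : ℕ) : ℚ) * x ^ (n - 2 * k)

/-- Valuations in the factorial formula `C(a+b, a) a! b! = (a+b)!`. -/
lemma val_choose_add (a b : ℕ) :
    padicValNat 2 ((a + b).choose a) + padicValNat 2 a.factorial + padicValNat 2 b.factorial
      = padicValNat 2 (a + b).factorial := by
  have h := Nat.choose_mul_factorial_mul_factorial (Nat.le_add_right a b)
  rw [Nat.add_sub_cancel_left] at h
  have h0 : (a + b).choose a ≠ 0 := (Nat.choose_pos (Nat.le_add_right a b)).ne'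
  rw [← h, padicValNat.mul (mul_ne_zero h0 a.factorial_ne_zero) b.factorial_ne_zero,
    padicValNat.mul h0 a.factorial_ne_zero]

lemma val_factorial_two_mul (n : ℕ) :
    padicValNat 2 (2 * n).factorial = padicValNat 2 n.factorial + n :=
  padicValNat_factorial_mul n

lemma val_factorial_two_mul_add_one (n : ℕ) :
    padicValNat 2 (2 * n + 1).factorial = padicValNat 2 n.factorial + n := by
  rw [padicValNat_factorial_mul_add n (by norm_num), val_factorial_two_mul]

/-- The exact 2-adic valuation of the coefficients of `Q_(2m+1)`, with `m = k + j`. -/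
lemma val_coeff (k j : ℕ) :
    padicValNat 2 ((2 * (k + j) + 1).choose k)
        + padicValNat 2 ((2 * (2 * (k + j) + 1) - 2 * k).choose (2 * (k + j) + 1))
      = 1 + padicValNat 2 ((2 * (k + j)).choose (k + j)) + padicValNat 2 ((k + j).choose k) := by
  have h1 := val_choose_add k (k + 2 * j + 1)
  have h2 := val_choose_add (2 * (k + j) + 1) (2 * j + 1)
  have h3 := val_choose_add k j
  have h4 := val_choose_add (k + j) (k + j)
  rw [show k + (k + 2 * j + 1) = 2 * (k + j) + 1 by ring, val_factorial_two_mul_add_one] at h1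
  rw [show 2 * (k + j) + 1 + (2 * j + 1) = 2 * (k + 2 * j + 1) by ring,
    val_factorial_two_mul_add_one, val_factorial_two_mul_add_one, val_factorial_two_mul] at h2
  rw [← two_mul, val_factorial_two_mul] at h4
  rw [show 2 * (2 * (k + j) + 1) - 2 * k = 2 * (k + 2 * j + 1) by omega]
  omega

/-- The exact 2-adic valuation of the summands of `legendreQ (2 * m + 1) r`, with `m = k + j`. -/
lemma val_term (r : ℚ) (hr : r ≠ 0) (k j : ℕ) :
    padicValRat 2 ((-1 : ℚ) ^ k * ((2 * (k + j) + 1).choose k : ℚ)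
        * (((2 * (2 * (k + j) + 1) - 2 * k).choose (2 * (k + j) + 1) : ℕ) : ℚ)
        * r ^ (2 * (k + j) + 1 - 2 * k))
      = 1 + padicValNat 2 ((2 * (k + j)).choose (k + j)) + padicValNat 2 ((k + j).choose k)
        + (2 * j + 1) * padicValRat 2 r := by
  have h := val_coeff k j
  have hA : (((2 * (k + j) + 1).choose k : ℕ) : ℚ) ≠ 0 :=
    Nat.cast_ne_zero.2 (Nat.choose_pos (by omega)).ne'
  have hB : (((2 * (2 * (k + j) + 1) - 2 * k).choose (2 * (k + j) + 1) : ℕ) : ℚ) ≠ 0 :=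
    Nat.cast_ne_zero.2 (Nat.choose_pos (by omega)).ne'
  have hs : ((-1 : ℚ) ^ k) ≠ 0 := pow_ne_zero _ (by norm_num)
  have hv : padicValRat 2 ((-1 : ℚ) ^ k) = 0 := by
    rcases neg_one_pow_eq_or ℚ k with h1 | h1 <;> simp [h1]
  rw [padicValRat.mul (mul_ne_zero (mul_ne_zero hs hA) hB) (pow_ne_zero _ hr),
    padicValRat.mul (mul_ne_zero hs hA) hB, padicValRat.mul hs hA, padicValRat.pow r, hv,
    padicValRat.of_nat, padicValRat.of_nat,
    show 2 * (k + j) + 1 - 2 * k = 2 * j + 1 by omega]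
  zify at h
  push_cast
  linarith

theorem stmt14 (r : ℚ) (hr : 1 ≤ padicValRat 2 r) (m : ℕ) :
    padicValRat 2 (legendreQ (2 * m + 1) r)
      = 1 + padicValRat 2 r + padicValNat 2 ((2 * m).choose m) := by
  have hr0 : r ≠ 0 := by
    rintro rfl
    simp at hr
  unfold legendreQ
  rw [show (2 * m + 1) / 2 + 1 = m + 1 by omega, Finset.sum_range_succ]
  have hlast := val_term r hr0 m 0
  simp only [Nat.choose_self, padicValNat_one_right, Nat.cast_zero, mul_zero, zero_add,
    one_mul, add_zero] at hlast
  set T : ℚ := (-1 : ℚ) ^ m * ((2 * m + 1).choose m : ℚ)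
        * (((2 * (2 * m + 1) - 2 * m).choose (2 * m + 1) : ℕ) : ℚ)
        * r ^ (2 * m + 1 - 2 * m) with hT
  have hT0 : T ≠ 0 := by
    intro h0
    rw [h0, padicValRat.zero] at hlast
    linarith [Int.natCast_nonneg (padicValNat 2 ((2 * m).choose m))]
  set S : ℚ := ∑ k ∈ Finset.range m, (-1 : ℚ) ^ k * ((2 * m + 1).choose k : ℚ)
        * (((2 * (2 * m + 1) - 2 * k).choose (2 * m + 1) : ℕ) : ℚ)
        * r ^ (2 * m + 1 - 2 * k) with hS
  -- `padicValRat 2 0 = 0`, so a vanishing sum of the higher terms is treated separately.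
  by_cases hS0 : S = 0
  · rw [hS0, zero_add, hlast]
    ring
  have hlt : padicValRat 2 T < padicValRat 2 S := by
    -- Dividing by `T` reduces the claim to the positivity of the valuation of a sum.
    have hquot : 0 < padicValRat 2 (S / T) := by
      rw [hS, Finset.sum_div]
      refine padicValRat.sum_pos_of_pos (fun k hk => ?_) ?_
      · obtain ⟨j, rfl⟩ := Nat.exists_eq_add_of_le hk.le
        have hj : 1 ≤ j := by omega
        have hk' := val_term r hr0 k j
        have hgt : padicValRat 2 T < 1 + padicValNat 2 ((2 * (k + j)).choose (k + j))
            + padicValNat 2 ((k + j).choose k) + (2 * j + 1) * padicValRat 2 r := by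
          rw [hlast]
          have hj' : (1 : ℤ) ≤ j := by exact_mod_cast hj
          nlinarith [Int.natCast_nonneg (padicValNat 2 ((k + j).choose k))]
        rw [← hk'] at hgt
        rw [padicValRat.div (fun h0 => ?_) hT0]
        · linarith
        · rw [h0, padicValRat.zero, hlast] at hgt
          linarith [Int.natCast_nonneg (padicValNat 2 ((2 * (k + j)).choose (k + j)))]
      · rw [← Finset.sum_div]
        exact div_ne_zero hS0 hT0
    rw [padicValRat.div hS0 hT0] at hquot
    linarith
  have hST : S + T ≠ 0 := by
    intro h
    rw [eq_neg_of_add_eq_zero_left h, padicValRat.neg] at hlt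
    exact lt_irrefl _ hlt
  rw [add_comm S T, padicValRat.add_eq_of_lt (by rwa [add_comm]) hT0 hS0 hlt, hlast]
  ring
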